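/- Define f(t) = cos(π cos t)·(9 cos²t - 4 cos²(2t)) + 12 sin(π cos t)·cos(2t)·cos t. Then f(t) < -π²/4 for all t ∈ ℝ. -/

import Mathlib

open Real

/-- `f(t) = cos(π cos t)(9 cos²t - 4 cos²(2t)) + 12 sin(π cos t) cos(2t) cos t`. -/
noncomputable def fPet (t : ℝ) : ℝ :=
  Real.cos (Real.pi * Real.cos t) *
      (9 * Real.cos t ^ 2 - 4 * Real.cos (2 * t) ^ 2) +
    12 * Real.sin (Real.pi * Real.cos t) * Real.cos (2 * t) * Real.cos t

open Complex Finset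
open scoped Nat

/-! With `c = cos t`, `z = 3c - 2(2c² - 1)i` and `s = c - 1/2`, the function is
`f(t) = Re (z² exp(iπc)) = Re (i z² exp(iπs))`. It is invariant under `t ↦ π - t`, so we may assume
`0 ≤ c ≤ 1`, that is `|s| ≤ 1/2`. Since `|z|² ≤ 13`, replacing `exp(iπs)` by its Taylor polynomial
of degree 6 with `π` rounded to `3.14` changes `f` by at most `0.13`. The maximum of `f` is about
`-2.725` while `-π²/4 ≈ -2.467`, which leaves room to bound the polynomial in `c` by `-2.6`. -/

section GrowthFromDerivative

variable {E : Type*} [NormedAddCommGroup E] [NormedSpace ℝ E] {f f' : ℝ → E} {n : ℕ}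

theorem norm_le_of_norm_deriv_le_pow_div_factorial_of_nonneg
    (hf : ∀ x, 0 ≤ x → HasDerivAt f (f' x) x) (h0 : f 0 = 0)
    (bound : ∀ x, 0 ≤ x → ‖f' x‖ ≤ x ^ n / n !) {x : ℝ} (hx : 0 ≤ x) :
    ‖f x‖ ≤ x ^ (n + 1) / (n + 1)! := by
  have hpow (y : ℝ) : HasDerivAt (fun y : ℝ ↦ y ^ (n + 1) / (n + 1)!) (y ^ n / n !) y := by
    refine ((hasDerivAt_pow (n + 1) y).div_const _).congr_deriv ?_
    rw [Nat.factorial_succ]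
    push_cast
    field_simp
  exact image_norm_le_of_norm_deriv_right_le_deriv_boundary (a := 0) (b := x)
    (fun y hy ↦ (hf y hy.1).continuousAt.continuousWithinAt)
    (fun y hy ↦ (hf y hy.1).hasDerivWithinAt)
    (by simp [h0]) hpow (fun y hy ↦ bound y hy.1) ⟨hx, le_rfl⟩

theorem norm_le_of_norm_deriv_le_abs_pow_div_factorial (hf : ∀ x, HasDerivAt f (f' x) x)
    (h0 : f 0 = 0) (bound : ∀ x, ‖f' x‖ ≤ |x| ^ n / n !) (x : ℝ) :
    ‖f x‖ ≤ |x| ^ (n + 1) / (n + 1)! := by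
  rcases le_total 0 x with hx | hx
  · rw [abs_of_nonneg hx]
    refine norm_le_of_norm_deriv_le_pow_div_factorial_of_nonneg (fun y _ ↦ hf y) h0
      (fun y hy ↦ ?_) hx
    simpa only [abs_of_nonneg hy] using bound y
  · have hneg (y : ℝ) : HasDerivAt (fun y ↦ f (-y)) (-f' (-y)) y := by
      simpa [Function.comp_def] using (hf (-y)).scomp y (hasDerivAt_neg y)
    have := norm_le_of_norm_deriv_le_pow_div_factorial_of_nonneg (fun y _ ↦ hneg y)
      (by simpa using h0) (fun y hy ↦ by simpa [abs_of_nonneg hy] using bound (-y))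
      (neg_nonneg.2 hx)
    simpa [abs_of_nonpos hx] using this

end GrowthFromDerivative

/-- The sum of the first `n` terms of the Taylor series of `x ↦ exp (i x)` at `0`. -/
noncomputable def expITaylor (n : ℕ) (x : ℝ) : ℂ := ∑ k ∈ range n, (I * x) ^ k / k !

theorem hasDerivAt_expITaylor_succ (n : ℕ) (x : ℝ) :
    HasDerivAt (expITaylor (n + 1)) (I * expITaylor n x) x := by
  have hI : HasDerivAt (fun x : ℝ ↦ I * x) I x := by
    simpa using (ofRealCLM.hasDerivAt (x := x)).const_mul I
  have hterm (k : ℕ) : HasDerivAt (fun x : ℝ ↦ (I * x) ^ (k + 1) / ((k + 1)! : ℂ))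
      (I * ((I * x) ^ k / k !)) x := by
    refine ((hI.fun_pow (k + 1)).div_const _).congr_deriv ?_
    rw [Nat.factorial_succ]
    push_cast
    field_simp
  unfold expITaylor
  simpa [sum_range_succ', mul_sum] using
    (HasDerivAt.fun_sum fun k (_ : k ∈ range n) ↦ hterm k).add_const (1 : ℂ)

theorem hasDerivAt_exp_I_mul_ofReal (x : ℝ) :
    HasDerivAt (fun x : ℝ ↦ cexp (I * x)) (I * cexp (I * x)) x := by
  simpa [mul_comm] using ((ofRealCLM.hasDerivAt (x := x)).const_mul I).cexp

theorem norm_exp_I_mul_ofReal_sub_expITaylor_le (n : ℕ) (x : ℝ) :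
    ‖cexp (I * x) - expITaylor n x‖ ≤ |x| ^ n / n ! := by
  induction n generalizing x with
  | zero => simp [expITaylor, norm_exp_I_mul_ofReal]
  | succ n ih =>
    refine norm_le_of_norm_deriv_le_abs_pow_div_factorial
      (fun y ↦ (hasDerivAt_exp_I_mul_ofReal y).fun_sub (hasDerivAt_expITaylor_succ n y)) ?_ ?_ x
    · simp [expITaylor, sum_range_succ']
    · simpa [← mul_sub] using ih

theorem norm_exp_I_mul_ofReal_sub_exp_I_mul_ofReal_le (x y : ℝ) :
    ‖cexp (I * x) - cexp (I * y)‖ ≤ |x - y| := by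
  have h : cexp (I * x) - cexp (I * y) = cexp (I * y) * (cexp (I * (x - y : ℝ)) - 1) := by
    rw [mul_sub_one, ← Complex.exp_add]
    push_cast
    ring_nf
  rw [h, norm_mul, norm_exp_I_mul_ofReal, one_mul]
  exact norm_exp_I_mul_ofReal_sub_one_le

theorem re_mul_le_re_mul_add_norm_mul_norm_sub (w u v : ℂ) :
    (w * u).re ≤ (w * v).re + ‖w‖ * ‖u - v‖ := by
  have := re_le_norm (w * (u - v))
  rw [norm_mul, mul_sub, sub_re] at this
  linarith

theorem expITaylor_seven (x : ℝ) : expITaylor 7 x =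
    ⟨1 - x ^ 2 / 2 + x ^ 4 / 24 - x ^ 6 / 720, x - x ^ 3 / 6 + x ^ 5 / 120⟩ := by
  rw [mk_eq_add_mul_I]
  simp only [expITaylor, sum_range_succ, range_zero, sum_empty, Nat.factorial]
  push_cast
  linear_combination (x ^ 4 / 24 + I * x ^ 5 / 120 + I ^ 2 * x ^ 6 / 720) * I_pow_four
    + (x ^ 2 / 2 + I * x ^ 3 / 6 + x ^ 6 / 720) * I_sq

theorem norm_exp_I_mul_pi_mul_sub_expITaylor_seven_le {s : ℝ} (hs : |s| ≤ 1 / 2) :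
    ‖cexp (I * (π * s : ℝ)) - expITaylor 7 (3.14 * s)‖ ≤ 0.01 := by
  have hπ : |π * s - 3.14 * s| ≤ 0.0016 * (1 / 2) := by
    rw [← sub_mul, abs_mul]
    gcongr
    rw [abs_le]
    constructor <;> linarith [pi_gt_d2, pi_lt_d4]
  have htaylor : |3.14 * s| ^ 7 / 7! ≤ (3.14 * (1 / 2)) ^ 7 / 7! := by
    rw [abs_mul, abs_of_pos (by norm_num : (0 : ℝ) < 3.14)]
    gcongr
  calc ‖cexp (I * (π * s : ℝ)) - expITaylor 7 (3.14 * s)‖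
      ≤ |π * s - 3.14 * s| + |3.14 * s| ^ 7 / 7! :=
        (norm_sub_le_norm_sub_add_norm_sub _ _ _).trans <|
          add_le_add (norm_exp_I_mul_ofReal_sub_exp_I_mul_ofReal_le _ _)
            (norm_exp_I_mul_ofReal_sub_expITaylor_le 7 _)
    _ ≤ 0.0016 * (1 / 2) + (3.14 * (1 / 2)) ^ 7 / 7! := add_le_add hπ htaylor
    _ ≤ 0.01 := by norm_num [Nat.factorial]

/-- The complex amplitude `z(c) = 3c - 2(2c² - 1)i`, for which
`f(t) = Re (z(cos t)² exp(iπ cos t))`. -/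
noncomputable def fPetAmplitude (c : ℝ) : ℂ := ⟨3 * c, -2 * (2 * c ^ 2 - 1)⟩

theorem fPet_pi_sub (t : ℝ) : fPet (π - t) = fPet t := by
  simp [fPet, mul_sub, Real.cos_two_pi_sub]

theorem fPet_eq_re (t : ℝ) :
    fPet t = (I * fPetAmplitude (Real.cos t) ^ 2 *
      cexp (I * (π * (Real.cos t - 1 / 2) : ℝ))).re := by
  have hcos : Real.cos (π * (Real.cos t - 1 / 2)) = Real.sin (π * Real.cos t) := by
    rw [← Real.cos_sub_pi_div_two]; ring_nf
  have hsin : Real.sin (π * (Real.cos t - 1 / 2)) = -Real.cos (π * Real.cos t) := by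
    rw [← Real.sin_sub_pi_div_two]; ring_nf
  rw [fPet, Real.cos_two_mul, mul_re, mul_comm I (ofReal _), exp_ofReal_mul_I_re,
    exp_ofReal_mul_I_im, hcos, hsin]
  simp only [fPetAmplitude, pow_two, mul_re, mul_im, I_re, I_im]
  ring

theorem norm_fPetAmplitude_sq_le {c : ℝ} (hc : |c| ≤ 1) : ‖fPetAmplitude c‖ ^ 2 ≤ 13 := by
  have hc2 : c ^ 2 ≤ 1 := (sq_le_one_iff_abs_le_one c).2 hc
  rw [Complex.sq_norm, normSq_apply, fPetAmplitude]
  nlinarith [mul_nonneg (sq_nonneg c) (sub_nonneg.2 hc2)]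

theorem re_fPetAmplitude_sq_mul_expITaylor_seven_lt {c : ℝ} (h0 : 0 ≤ c) (h1 : c ≤ 1) :
    (I * fPetAmplitude c ^ 2 * expITaylor 7 (3.14 * (c - 1 / 2))).re < -2.6 := by
  rw [expITaylor_seven]
  simp only [fPetAmplitude, pow_two, mul_re, mul_im, I_re, I_im]
  have bernstein {a b : ℝ} (ha : 0 ≤ a) (hb : 0 ≤ b) (i j : ℕ) : 0 ≤ a ^ i * b ^ j := by
    positivity
  -- On each half of `[0, 1]`, all Bernstein coefficients of this degree 9 polynomial in `c`
  -- are below `-2.6`.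
  rcases le_total c (1 / 2) with h | h
  · have B := bernstein h0 (sub_nonneg.2 h)
    linarith [B 0 9, B 1 8, B 2 7, B 3 6, B 4 5, B 5 4, B 6 3, B 7 2, B 8 1, B 9 0]
  · have B := bernstein (sub_nonneg.2 h) (sub_nonneg.2 h1)
    linarith [B 0 9, B 1 8, B 2 7, B 3 6, B 4 5, B 5 4, B 6 3, B 7 2, B 8 1, B 9 0]

theorem fPet_lt_of_cos_nonneg {t : ℝ} (ht : 0 ≤ Real.cos t) : fPet t < -(π ^ 2 / 4) := by
  set c := Real.cos t
  set w := I * fPetAmplitude c ^ 2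
  set T := expITaylor 7 (3.14 * (c - 1 / 2))
  have hc : c ≤ 1 := Real.cos_le_one t
  have hw : ‖w‖ ≤ 13 := by
    simpa [w] using norm_fPetAmplitude_sq_le (abs_cos_le_one t)
  have hT : ‖cexp (I * (π * (c - 1 / 2) : ℝ)) - T‖ ≤ 0.01 :=
    norm_exp_I_mul_pi_mul_sub_expITaylor_seven_le (abs_le.2 ⟨by linarith, by linarith⟩)
  calc fPet t = (w * cexp (I * (π * (c - 1 / 2) : ℝ))).re := fPet_eq_re t
    _ ≤ (w * T).re + ‖w‖ * ‖cexp (I * (π * (c - 1 / 2) : ℝ)) - T‖ :=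
      re_mul_le_re_mul_add_norm_mul_norm_sub _ _ _
    _ ≤ (w * T).re + 13 * 0.01 := by gcongr
    _ < -2.6 + 13 * 0.01 := by
      gcongr
      exact re_fPetAmplitude_sq_mul_expITaylor_seven_lt ht hc
    _ < -(π ^ 2 / 4) := by nlinarith [pi_pos, pi_lt_d4]

theorem fPet_lt_neg_pi_sq_div_four : ∀ t : ℝ, fPet t < -(Real.pi ^ 2 / 4) := by
  intro t
  rcases le_total 0 (Real.cos t) with ht | ht
  · exact fPet_lt_of_cos_nonneg ht
  · rw [← fPet_pi_sub]
    exact fPet_lt_of_cos_nonneg (by rwa [Real.cos_pi_sub, neg_nonneg])
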